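/- Let X be a real Banach space with the IP_{f,∞}, i.e., every family of closed balls in X with empty intersection contains a finite subfamily with empty intersection. Then X has the Mazur Intersection Property if and only if every nonempty norm-closed, bounded, convex set in X is the norm-closed convex hull of its set of farthest points. -/

import Mathlib

open Metric Set Pointwise

/-- The farthest distance map `r_K(x) = sup {‖z - x‖ : z ∈ K}`. -/
noncomputable def rFar {X : Type*} [NormedAddCommGroup X] (K : Set X) (x : X) : ℝ :=
  sSup ((fun z => ‖z - x‖) '' K)

/-- `Q_K(x)`: the set of points of `K` farthest from `x`. -/
def QFar {X : Type*} [NormedAddCommGroup X] (K : Set X) (x : X) : Set X :=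
  {z ∈ K | ‖z - x‖ = rFar K x}

/-- `D(K)`: the set of points admitting a farthest point in `K`. -/
def DFar {X : Type*} [NormedAddCommGroup X] (K : Set X) : Set X :=
  {x | (QFar K x).Nonempty}

/-- `b(K)`: the set of farthest points of `K`. -/
def farPoints {X : Type*} [NormedAddCommGroup X] (K : Set X) : Set X :=
  ⋃ x ∈ DFar K, QFar K x

/-- The crescent `C(K, x, α) = {z ∈ K : ‖z - x‖ > r_K(x) - α}`. -/
def crescent {X : Type*} [NormedAddCommGroup X] (K : Set X) (x : X) (α : ℝ) : Set X :=
  {z ∈ K | rFar K x - α < ‖z - x‖}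

/-- Property (R): every crescent of `K` contains a farthest point of `K`. -/
def PropR {X : Type*} [NormedAddCommGroup X] (K : Set X) : Prop :=
  ∀ (x : X) (α : ℝ), 0 < α → ∃ z ∈ crescent K x α, z ∈ farPoints K

/-- A set is admissible if it is the intersection of all closed balls containing it. -/
def Admissible {X : Type*} [NormedAddCommGroup X] (K : Set X) : Prop :=
  K = ⋂ p ∈ {p : X × ℝ | K ⊆ closedBall p.1 p.2}, closedBall p.1 p.2

/-!
Under the MIP and the IP_{f,∞}, a decreasing sequence of nonempty closed bounded convex sets has a
common point, because any finitely many balls, each containing one of the sets, intersect. This is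
the only form of weak compactness needed in Lau's theorem that `D(K)` is dense. For each `ε > 0`,
the set of `x` at which `r_K` decreases at rate more than `r_K(x) - ε` towards some point of `K` is
open, and dense: if `z ∈ K` is almost farthest from `x`, move from `x` away from `z`. At a point `x`
of the Baire intersection of these sets, the points of `K` towards which `r_K` decreases that fast
form convex sets, decreasing with `ε`, and a common point of their closures is farthest from `x`.
Once `D(K)` is dense, every closed ball containing `b(K)` contains `K`.

Conversely, let `x₀ ∉ K` lie in every ball containing `K`, and let a functional `f` separate `x₀`
strictly from `S = K + ε B`. If `S` lies in the ball `B(x, R)`, then `K`, hence also `x₀`, lies in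
`B(x, R - ε)`. So in the closed convex hull `K'` of `{x₀} ∪ S`, a point on the side of `x₀` is at
distance less than `R` from `x`. Hence all farthest points of `K'` lie on the side of `S`,
while `x₀ ∈ K'`.
-/

section FarthestPoints

variable {X : Type*} [NormedAddCommGroup X] {K : Set X}

theorem norm_sub_le_rFar (hK : Bornology.IsBounded K) (x : X) {z : X} (hz : z ∈ K) :
    ‖z - x‖ ≤ rFar K x := by
  obtain ⟨r, hr⟩ := hK.subset_closedBall x
  refine le_csSup ⟨r, ?_⟩ (mem_image_of_mem _ hz)
  rintro _ ⟨w, hw, rfl⟩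
  exact mem_closedBall_iff_norm.1 (hr hw)

theorem rFar_nonneg (K : Set X) (x : X) : 0 ≤ rFar K x :=
  Real.sSup_nonneg (forall_mem_image.2 fun _ _ => norm_nonneg _)

theorem rFar_le {x : X} {c : ℝ} (hc : 0 ≤ c) (h : ∀ z ∈ K, ‖z - x‖ ≤ c) : rFar K x ≤ c :=
  Real.sSup_le (forall_mem_image.2 h) hc

theorem exists_lt_norm_sub_of_lt_rFar (hne : K.Nonempty) {x : X} {c : ℝ} (h : c < rFar K x) :
    ∃ z ∈ K, c < ‖z - x‖ :=
  exists_mem_image.1 (exists_lt_of_lt_csSup (hne.image _) h)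

theorem lipschitzWith_rFar (hK : Bornology.IsBounded K) : LipschitzWith 1 (rFar K) := by
  refine LipschitzWith.of_le_add fun x y => ?_
  refine rFar_le (add_nonneg (rFar_nonneg K y) dist_nonneg) fun z hz => ?_
  calc ‖z - x‖ ≤ ‖z - y‖ + ‖y - x‖ := norm_sub_le_norm_sub_add_norm_sub z y x
    _ ≤ rFar K y + dist x y := by
      rw [dist_eq_norm']
      gcongr
      exact norm_sub_le_rFar hK y hz

theorem convexOn_rFar [NormedSpace ℝ X] (hK : Bornology.IsBounded K) :
    ConvexOn ℝ univ (rFar K) := by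
  refine ⟨convex_univ, fun x _ y _ a b ha hb hab => ?_⟩
  have hx := rFar_nonneg K x
  have hy := rFar_nonneg K y
  refine rFar_le (by positivity) fun z hz => ?_
  calc ‖z - (a • x + b • y)‖ ≤ a * ‖z - x‖ + b * ‖z - y‖ := by
        simpa [dist_eq_norm'] using
          (convexOn_univ_dist z).2 (mem_univ x) (mem_univ y) ha hb hab
    _ ≤ a • rFar K x + b • rFar K y := by
      simp only [smul_eq_mul]
      gcongr <;> exact norm_sub_le_rFar hK _ hz

theorem mem_farPoints_iff {z : X} : z ∈ farPoints K ↔ ∃ x, z ∈ QFar K x := by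
  simp only [farPoints, mem_iUnion, exists_prop]
  exact exists_congr fun x => and_iff_right_of_imp fun hz => ⟨z, hz⟩

theorem farPoints_subset (K : Set X) : farPoints K ⊆ K := fun _ hz =>
  let ⟨_, hx⟩ := mem_farPoints_iff.1 hz
  hx.1

theorem subset_closedBall_of_farPoints_subset (hK : Bornology.IsBounded K)
    (hD : Dense (DFar K)) {c : X} {r : ℝ} (h : farPoints K ⊆ closedBall c r) :
    K ⊆ closedBall c r := by
  have hr := (lipschitzWith_rFar hK).continuous
  have hle : ∀ x, rFar K x ≤ r + dist c x := by
    refine fun x => hD.induction (P := fun x => rFar K x ≤ r + dist c x) ?_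
      (isClosed_le hr (by fun_prop)) x
    rintro x ⟨z, hz⟩
    calc rFar K x = dist z x := by rw [← hz.2, dist_eq_norm]
      _ ≤ dist z c + dist c x := dist_triangle _ _ _
      _ ≤ r + dist c x := by
        gcongr
        exact h (mem_farPoints_iff.2 ⟨x, hz⟩)
  intro z hz
  exact mem_closedBall_iff_norm.2 (by simpa using (norm_sub_le_rFar hK c hz).trans (hle c))

end FarthestPoints

section BallIntersection

variable {X : Type*} [NormedAddCommGroup X]

theorem admissible_iff {K : Set X} :
    Admissible K ↔ ∀ x, (∀ c r, K ⊆ closedBall c r → x ∈ closedBall c r) → x ∈ K := by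
  have hK : K ⊆ ⋂ p ∈ {p : X × ℝ | K ⊆ closedBall p.1 p.2}, closedBall p.1 p.2 :=
    subset_iInter₂ fun _ hp => hp
  rw [Admissible, Subset.antisymm_iff, and_iff_right hK]
  simp only [subset_def (t := K), mem_iInter, mem_ofPred_eq, Prod.forall]

/-- The Mazur Intersection Property. -/
def MazurIntersectionProperty (X : Type*) [NormedAddCommGroup X] [NormedSpace ℝ X] : Prop :=
  ∀ K : Set X, IsClosed K → Bornology.IsBounded K → Convex ℝ K → Admissible K

/-- The property IP_{f,∞}. Balls are encoded by pairs (centre, radius), where a negative radius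
gives the empty set. -/
def FiniteBallIntersectionProperty (X : Type*) [NormedAddCommGroup X] : Prop :=
  ∀ B : Set (X × ℝ), (⋂ p ∈ B, closedBall p.1 p.2) = ∅ →
    ∃ s : Finset (X × ℝ), ↑s ⊆ B ∧ (⋂ p ∈ s, closedBall p.1 p.2) = ∅

theorem FiniteBallIntersectionProperty.nonempty_iInter_of_directed
    (hX : FiniteBallIntersectionProperty X) {ι : Type*} [Nonempty ι] {C : ι → Set X}
    (hdir : Directed (· ⊇ ·) C) (hne : ∀ i, (C i).Nonempty) (hC : ∀ i, Admissible (C i)) :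
    (⋂ i, C i).Nonempty := by
  have hballs :
      (⋂ p ∈ {p : X × ℝ | ∃ i, C i ⊆ closedBall p.1 p.2}, closedBall p.1 p.2).Nonempty := by
    by_contra hempty
    obtain ⟨s, hs, hs_empty⟩ := hX _ (not_nonempty_iff_eq_empty.1 hempty)
    choose! i hi using hs
    classical
    obtain ⟨j, hj⟩ := hdir.finset_le (s.image i)
    obtain ⟨z, hz⟩ := hne j
    have hzs : z ∈ ⋂ p ∈ s, closedBall p.1 p.2 :=
      mem_iInter₂.2 fun p hp => hi hp (hj _ (Finset.mem_image_of_mem i hp) hz)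
    exact notMem_empty z (hs_empty ▸ hzs)
  obtain ⟨z, hz⟩ := hballs
  exact ⟨z, mem_iInter.2 fun i => admissible_iff.1 (hC i) z fun c r hcr =>
    mem_iInter₂.1 hz (c, r) ⟨i, hcr⟩⟩

end BallIntersection

section Lau

variable {X : Type*} [NormedAddCommGroup X] [NormedSpace ℝ X] {K : Set X} {x z : X} {ε : ℝ}

/-- Decreasing sequences of nonempty closed convex subsets of `K` have a common point. For closed
convex `K` this is Šmulian's characterization of weak compactness. -/
def IsSmulianCompact (K : Set X) : Prop :=
  ∀ C : ℕ → Set X, Antitone C → (∀ n, C n ⊆ K) → (∀ n, (C n).Nonempty) →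
    (∀ n, IsClosed (C n)) → (∀ n, Convex ℝ (C n)) → (⋂ n, C n).Nonempty

/-- The points `z` of `K` such that, on the way from `x` to `z`, the convex function `r_K` drops
somewhere strictly below the segment that joins the value `r_K(x)` at `x` to the value `ε` at `z`.
Equivalently, the slope of `r_K` at `x` in the direction `z - x` is less than `-(r_K(x) - ε)`. -/
def descentPoints (K : Set X) (x : X) (ε : ℝ) : Set X :=
  {z ∈ K | ∃ s > 0, rFar K ((1 - s) • x + s • z) < (1 - s) * rFar K x + s * ε}

theorem descentPoints_subset (K : Set X) (x : X) (ε : ℝ) : descentPoints K x ε ⊆ K :=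
  sep_subset _ _

theorem descentPoints_mono (K : Set X) (x : X) : Monotone (descentPoints K x) := by
  rintro ε ε' h z ⟨hz, s, hs, hlt⟩
  exact ⟨hz, s, hs, hlt.trans_le (by gcongr)⟩

theorem rFar_lt_chord_of_le (hK : Bornology.IsBounded K) {s t : ℝ} (ht : 0 < t) (hts : t ≤ s)
    (h : rFar K ((1 - s) • x + s • z) < (1 - s) * rFar K x + s * ε) :
    rFar K ((1 - t) • x + t • z) < (1 - t) * rFar K x + t * ε := by
  have hs : 0 < s := ht.trans_le hts
  obtain ⟨q, hq, rfl⟩ : ∃ q, 0 < q ∧ t = q * s := ⟨t / s, by positivity, by field_simp⟩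
  have hq1 : q ≤ 1 := le_of_mul_le_mul_right (by simpa using hts) hs
  calc rFar K ((1 - q * s) • x + (q * s) • z)
      = rFar K ((1 - q) • x + q • ((1 - s) • x + s • z)) := by congr 1; module
    _ ≤ (1 - q) * rFar K x + q * rFar K ((1 - s) • x + s • z) :=
      (convexOn_rFar hK).2 (mem_univ _) (mem_univ _) (sub_nonneg.2 hq1) hq.le (by ring)
    _ < (1 - q) * rFar K x + q * ((1 - s) * rFar K x + s * ε) := by gcongr
    _ = (1 - q * s) * rFar K x + q * s * ε := by ring

theorem convex_descentPoints (hK : Bornology.IsBounded K) (hconv : Convex ℝ K) (x : X) (ε : ℝ) :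
    Convex ℝ (descentPoints K x ε) := by
  rintro z ⟨hz, s, hs, hzs⟩ w ⟨hw, t, ht, hwt⟩ a b ha hb hab
  have hu : 0 < min s t := lt_min hs ht
  refine ⟨hconv hz hw ha hb hab, min s t, hu, ?_⟩
  have hzu := rFar_lt_chord_of_le hK hu (min_le_left s t) hzs
  have hwu := rFar_lt_chord_of_le hK hu (min_le_right s t) hwt
  generalize min s t = u at hzu hwu ⊢
  have hcomb : (1 - u) • x + u • (a • z + b • w)
      = a • ((1 - u) • x + u • z) + b • ((1 - u) • x + u • w) := by
    obtain rfl : b = 1 - a := by linarith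
    module
  rw [hcomb]
  exact ((convexOn_rFar hK).convex_lt _ ⟨mem_univ _, hzu⟩ ⟨mem_univ _, hwu⟩ ha hb hab).2

theorem sub_lt_norm_sub_of_mem_descentPoints (hK : Bornology.IsBounded K)
    (hz : z ∈ descentPoints K x ε) : rFar K x - ε < ‖z - x‖ := by
  obtain ⟨-, s, hs, hlt⟩ := hz
  have hdist : dist x ((1 - s) • x + s • z) = s * ‖z - x‖ := by
    rw [dist_eq_norm', show (1 - s) • x + s • z - x = s • (z - x) by module,
      norm_smul_of_nonneg hs.le]
  have hlip : rFar K x ≤ rFar K ((1 - s) • x + s • z) + s * ‖z - x‖ := by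
    simpa [hdist] using (lipschitzWith_rFar hK).le_add_mul x ((1 - s) • x + s • z)
  exact lt_of_mul_lt_mul_left (by linarith) hs.le

theorem isOpen_setOf_nonempty_descentPoints (hK : Bornology.IsBounded K) (ε : ℝ) :
    IsOpen {x | (descentPoints K x ε).Nonempty} := by
  have hr := (lipschitzWith_rFar hK).continuous
  have hunion : {x | (descentPoints K x ε).Nonempty} = ⋃ z ∈ K, ⋃ s > (0 : ℝ),
      {x | rFar K ((1 - s) • x + s • z) < (1 - s) * rFar K x + s * ε} := by
    ext x
    simp [descentPoints, Set.Nonempty]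
  rw [hunion]
  exact isOpen_biUnion fun z _ => isOpen_biUnion fun s _ => isOpen_lt (by fun_prop) (by fun_prop)

theorem mem_descentPoints_add_smul_sub (hK : Bornology.IsBounded K) (hz : z ∈ K) {l : ℝ}
    (hl : 0 < l) (h : (1 + l) * rFar K x < (1 + l) * ‖z - x‖ + l * ε) :
    z ∈ descentPoints K (x + l • (x - z)) ε := by
  have hx : (1 - l / (1 + l)) • (x + l • (x - z)) + (l / (1 + l)) • z = x := by
    match_scalars <;> field
  have hfar : (1 + l) * ‖z - x‖ ≤ rFar K (x + l • (x - z)) := by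
    rw [← norm_smul_of_nonneg (by positivity : 0 ≤ 1 + l)]
    convert! norm_sub_le_rFar hK (x + l • (x - z)) hz using 2
    module
  refine ⟨hz, l / (1 + l), by positivity, ?_⟩
  have hchord (r : ℝ) : (1 - l / (1 + l)) * r + l / (1 + l) * ε = (r + l * ε) / (1 + l) := by
    field
  rw [hx, hchord, lt_div_iff₀' (by positivity)]
  linarith

theorem dense_setOf_nonempty_descentPoints (hne : K.Nonempty) (hK : Bornology.IsBounded K)
    (hε : 0 < ε) : Dense {x | (descentPoints K x ε).Nonempty} := by
  refine fun x => Metric.mem_closure_iff.2 fun δ hδ => ?_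
  obtain ⟨l, hl, hlδ⟩ := exists_pos_mul_lt hδ (rFar K x)
  obtain ⟨z, hz, hzx⟩ : ∃ z ∈ K, rFar K x - l * ε / (1 + l) < ‖z - x‖ :=
    exists_lt_norm_sub_of_lt_rFar hne (sub_lt_self _ (by positivity))
  refine ⟨x + l • (x - z), ⟨z, mem_descentPoints_add_smul_sub hK hz hl ?_⟩, ?_⟩
  · rw [sub_lt_iff_lt_add, ← sub_lt_iff_lt_add', lt_div_iff₀' (by positivity)] at hzx
    linarith
  · calc dist x (x + l • (x - z)) = l * ‖z - x‖ := by
          rw [dist_self_add_right, norm_smul_of_nonneg hl.le, norm_sub_rev]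
      _ ≤ l * rFar K x := by gcongr; exact norm_sub_le_rFar hK x hz
      _ < δ := by rwa [mul_comm]

theorem IsSmulianCompact.mem_DFar (hcomp : IsSmulianCompact K) (hcl : IsClosed K)
    (hK : Bornology.IsBounded K) (hconv : Convex ℝ K)
    (hx : ∀ n : ℕ, (descentPoints K x (1 / (n + 1))).Nonempty) : x ∈ DFar K := by
  have hsub (n : ℕ) : closure (descentPoints K x (1 / (n + 1))) ⊆ K :=
    closure_minimal (descentPoints_subset _ _ _) hcl
  obtain ⟨z, hz⟩ := hcomp (fun n => closure (descentPoints K x (1 / (n + 1))))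
    (fun _ _ hmn => closure_mono (descentPoints_mono K x (Nat.one_div_le_one_div hmn)))
    hsub (fun n => (hx n).closure) (fun _ => isClosed_closure)
    (fun _ => (convex_descentPoints hK hconv x _).closure)
  rw [mem_iInter] at hz
  have hzK : z ∈ K := hsub 0 (hz 0)
  have hle (n : ℕ) : rFar K x ≤ ‖z - x‖ + 1 / (n + 1) := by
    refine closure_minimal (t := {w | rFar K x ≤ ‖w - x‖ + 1 / (n + 1)}) (fun w hw => ?_)
      (isClosed_le (by fun_prop) (by fun_prop)) (hz n)
    exact (sub_lt_iff_lt_add.1 (sub_lt_norm_sub_of_mem_descentPoints hK hw)).le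
  refine ⟨z, hzK, (norm_sub_le_rFar hK x hzK).antisymm (ge_of_tendsto' (x := Filter.atTop) ?_ hle)⟩
  simpa using tendsto_one_div_add_atTop_nhds_zero_nat.const_add ‖z - x‖

theorem IsSmulianCompact.dense_DFar [CompleteSpace X] (hcomp : IsSmulianCompact K)
    (hne : K.Nonempty) (hcl : IsClosed K) (hK : Bornology.IsBounded K) (hconv : Convex ℝ K) :
    Dense (DFar K) := by
  have hdense : Dense (⋂ n : ℕ, {x | (descentPoints K x (1 / (n + 1))).Nonempty}) :=
    dense_iInter_of_isOpen_nat (fun _ => isOpen_setOf_nonempty_descentPoints hK _)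
      fun _ => dense_setOf_nonempty_descentPoints hne hK Nat.one_div_pos_of_nat
  exact hdense.mono fun x hx => hcomp.mem_DFar hcl hK hconv (mem_iInter.1 hx)

theorem MazurIntersectionProperty.isSmulianCompact (hM : MazurIntersectionProperty X)
    (hX : FiniteBallIntersectionProperty X) (hK : Bornology.IsBounded K) :
    IsSmulianCompact K := fun C hanti hsub hne hcl hconv =>
  hX.nonempty_iInter_of_directed hanti.directed_ge hne fun n =>
    hM (C n) (hcl n) (hK.subset (hsub n)) (hconv n)

theorem MazurIntersectionProperty.eq_closedConvexHull_farPoints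
    (hM : MazurIntersectionProperty X) (hcl : IsClosed K) (hK : Bornology.IsBounded K)
    (hconv : Convex ℝ K) (hD : Dense (DFar K)) : K = closedConvexHull ℝ (farPoints K) := by
  have hsub : closedConvexHull ℝ (farPoints K) ⊆ K :=
    closedConvexHull_min (farPoints_subset K) hconv hcl
  have hadm : Admissible (closedConvexHull ℝ (farPoints K)) :=
    hM _ isClosed_closedConvexHull (hK.subset hsub) convex_closedConvexHull
  refine Subset.antisymm (fun z hz => admissible_iff.1 hadm z fun c r h => ?_) hsub
  exact subset_closedBall_of_farPoints_subset hK hD (subset_closedConvexHull.trans h) hz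

end Lau

section Separation

variable {X : Type*} [NormedAddCommGroup X] [NormedSpace ℝ X] {K S : Set X} {x x₀ z : X}
  {f : StrongDual ℝ X} {a ε R : ℝ}

theorem isBounded_closedConvexHull (hS : Bornology.IsBounded S) :
    Bornology.IsBounded (closedConvexHull ℝ S) := by
  rw [closedConvexHull_eq_closure_convexHull]
  exact (isBounded_convexHull.2 hS).closure

theorem exists_norm_eq_one_norm_smul_eq [Nontrivial X] (x : X) :
    ∃ u : X, ‖u‖ = 1 ∧ ‖x‖ • u = x := by
  rcases eq_or_ne x 0 with rfl | hx
  · obtain ⟨u, hu⟩ := exists_norm_eq X zero_le_one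
    exact ⟨u, hu, by simp⟩
  · exact ⟨NormedSpace.normalize x, NormedSpace.norm_normalize hx,
      NormedSpace.norm_smul_normalize x⟩

theorem dist_add_le_of_closedBall_subset_closedBall [Nontrivial X] (hε : 0 ≤ ε)
    (h : closedBall z ε ⊆ closedBall x R) : dist z x + ε ≤ R := by
  obtain ⟨u, hu, hzx⟩ := exists_norm_eq_one_norm_smul_eq (z - x)
  have hmem : z + ε • u ∈ closedBall z ε := by simp [norm_smul, hu, abs_of_nonneg hε]
  calc dist z x + ε = ‖(‖z - x‖ + ε) • u‖ := by
        rw [norm_smul_of_nonneg (by positivity), hu, mul_one, dist_eq_norm]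
    _ = ‖z + ε • u - x‖ := by rw [add_smul, hzx]; congr 1; abel
    _ ≤ R := mem_closedBall_iff_norm.1 (h hmem)

theorem apply_le_of_mem_closedConvexHull_insert (hε : 0 < ε) (ha : a < f x₀)
    (hSf : ∀ y ∈ S, f y ≤ a) (hS : S ⊆ closedBall x R) (hx₀ : dist x₀ x ≤ R - ε)
    (hz : z ∈ closedConvexHull ℝ (insert x₀ S)) (hzR : R ≤ dist z x) : f z ≤ a := by
  have hgap : 0 < f x₀ - a := sub_pos.2 ha
  -- The weights balance the excess `f x₀ - a` against the slack `ε` at `x₀`.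
  let φ : X → ℝ := fun y => ε * f y + (f x₀ - a) * dist y x
  have hφ : ConvexOn ℝ univ φ :=
    ((f.toLinearMap.convexOn convex_univ).smul hε.le).add ((convexOn_univ_dist x).smul hgap.le)
  have hφz : φ z ≤ ε * a + (f x₀ - a) * R := by
    have hconv := hφ.convex_le (ε * a + (f x₀ - a) * R)
    simp only [mem_univ, true_and] at hconv
    refine closedConvexHull_min (insert_subset ?_ fun y hy => ?_) hconv
      (isClosed_le (by fun_prop) (by fun_prop)) hz
    · calc φ x₀ ≤ ε * f x₀ + (f x₀ - a) * (R - ε) := by simp only [φ]; gcongr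
        _ = ε * a + (f x₀ - a) * R := by ring
    · simp only [φ, mem_ofPred_eq]
      gcongr
      exacts [hSf y hy, hS hy]
  have hR : (f x₀ - a) * R ≤ (f x₀ - a) * dist z x := by gcongr
  exact le_of_mul_le_mul_left (by simp only [φ] at hφz; linarith) hε

theorem apply_le_of_mem_farPoints_closedConvexHull_insert [Nontrivial X]
    (hK : Bornology.IsBounded K) (hε : 0 < ε) (ha : a < f x₀)
    (hf : ∀ y ∈ K + closedBall 0 ε, f y ≤ a)
    (hx₀ : ∀ c r, K ⊆ closedBall c r → x₀ ∈ closedBall c r)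
    (hz : z ∈ farPoints (closedConvexHull ℝ (insert x₀ (K + closedBall 0 ε)))) : f z ≤ a := by
  set S : Set X := K + closedBall 0 ε
  obtain ⟨x, hz, hzx⟩ := mem_farPoints_iff.1 hz
  have hbdd : Bornology.IsBounded (closedConvexHull ℝ (insert x₀ S)) :=
    isBounded_closedConvexHull ((hK.add isBounded_closedBall).insert x₀)
  have hS : S ⊆ closedBall x ‖z - x‖ := fun y hy => by
    rw [mem_closedBall_iff_norm, hzx]
    exact norm_sub_le_rFar hbdd x (subset_closedConvexHull (mem_insert_of_mem _ hy))
  have hKx : K ⊆ closedBall x (‖z - x‖ - ε) := fun k hk => by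
    have hball : closedBall k ε ⊆ S := by
      rw [← singleton_add_closedBall_zero]
      exact add_subset_add_right (singleton_subset_iff.2 hk)
    exact le_sub_iff_add_le.2
      (dist_add_le_of_closedBall_subset_closedBall hε.le (hball.trans hS))
  exact apply_le_of_mem_closedConvexHull_insert hε ha hf hS (hx₀ _ _ hKx) hz (dist_eq_norm z x).ge

theorem exists_apply_le_add_closedBall_lt (hcl : IsClosed K) (hconv : Convex ℝ K)
    (hx₀ : x₀ ∉ K) :
    ∃ (f : StrongDual ℝ X) (a ε : ℝ), 0 < ε ∧ (∀ y ∈ K + closedBall 0 ε, f y ≤ a) ∧ a < f x₀ := by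
  obtain ⟨f, u, hKu, hux⟩ := geometric_hahn_banach_closed_point hconv hcl hx₀
  obtain ⟨a, hua, hax⟩ := exists_between hux
  have hnhds : {v | f v < a - u} ∈ nhds (0 : X) :=
    (isOpen_lt (by fun_prop) (by fun_prop)).mem_nhds (by simpa using hua)
  obtain ⟨ε, hε, hball⟩ := nhds_basis_closedBall.mem_iff.1 hnhds
  refine ⟨f, a, ε, hε, ?_, hax⟩
  rintro _ ⟨k, hk, v, hv, rfl⟩
  have hv' : f v < a - u := hball hv
  rw [map_add]
  linarith [hKu k hk]

theorem mazurIntersectionProperty_of_subset_closedConvexHull_farPoints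
    (h : ∀ K : Set X, K.Nonempty → IsClosed K → Bornology.IsBounded K → Convex ℝ K →
      K ⊆ closedConvexHull ℝ (farPoints K)) : MazurIntersectionProperty X := by
  refine fun K hcl hK hconv => admissible_iff.2 fun x₀ hx₀ => ?_
  by_contra hx₀K
  rcases K.eq_empty_or_nonempty with rfl | ⟨k, hk⟩
  · simpa using hx₀ x₀ (-1) (empty_subset _)
  have : Nontrivial X := ⟨k, x₀, ne_of_mem_of_not_mem hk hx₀K⟩
  obtain ⟨f, a, ε, hε, hf, ha⟩ := exists_apply_le_add_closedBall_lt hcl hconv hx₀K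
  set K' : Set X := closedConvexHull ℝ (insert x₀ (K + closedBall 0 ε))
  have hx₀K' : x₀ ∈ K' := subset_closedConvexHull (mem_insert _ _)
  have hbdd : Bornology.IsBounded K' :=
    isBounded_closedConvexHull ((hK.add isBounded_closedBall).insert x₀)
  have hhalf : closedConvexHull ℝ (farPoints K') ⊆ {y | f y ≤ a} :=
    closedConvexHull_min
      (fun z hz => apply_le_of_mem_farPoints_closedConvexHull_insert hK hε ha hf hx₀ hz)
      (convex_halfSpace_le f.toLinearMap.isLinear a) (isClosed_le (by fun_prop) (by fun_prop))
  exact ha.not_ge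
    (hhalf (h K' ⟨x₀, hx₀K'⟩ isClosed_closedConvexHull hbdd convex_closedConvexHull hx₀K'))

end Separation

/-- Corollary IP: if `X` has the IP_{f,∞}, then `X` has the MIP iff every nonempty closed
bounded convex set is the closed convex hull of its farthest points. -/
theorem stmt_10 {X : Type*} [NormedAddCommGroup X] [NormedSpace ℝ X] [CompleteSpace X]
    (hIP : ∀ B : Set (X × ℝ), (⋂ p ∈ B, closedBall p.1 p.2) = ∅ →
      ∃ s : Finset (X × ℝ), ↑s ⊆ B ∧ (⋂ p ∈ s, closedBall p.1 p.2) = ∅) :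
    (∀ K : Set X, IsClosed K → Bornology.IsBounded K → Convex ℝ K → Admissible K) ↔
    (∀ K : Set X, K.Nonempty → IsClosed K → Bornology.IsBounded K → Convex ℝ K →
      K = closure (convexHull ℝ (farPoints K))) := by
  simp only [← closedConvexHull_eq_closure_convexHull (𝕜 := ℝ)]
  constructor
  · intro (hM : MazurIntersectionProperty X) K hne hcl hK hconv
    have hD : Dense (DFar K) := (hM.isSmulianCompact hIP hK).dense_DFar hne hcl hK hconv
    exact hM.eq_closedConvexHull_farPoints hcl hK hconv hD
  · exact fun hF => mazurIntersectionProperty_of_subset_closedConvexHull_farPoints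
      fun K hne hcl hK hconv => (hF K hne hcl hK hconv).subset
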